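/- arXiv:1905.08670 — 2 statements merged into one kernel-verified Lean document; each statement's English description precedes it below -/
import Mathlib

section
/- For every finite simple graph G, the a-vertex arboricity of G is at most one more than the minimum size of a feedback vertex set of G, i.e. ava(G) ≤ τ(G) + 1. -/
open Function

section Defs

variable {V : Type*}

/-- The vertex set `S` contains a directed cycle of the digraph `D`, i.e. there is a
closed directed walk of positive length all of whose vertices lie in `S`. -/
def HasDicycle (D : V → V → Prop) (S : Set V) : Prop :=
  ∃ v, Relation.TransGen (fun a b => a ∈ S ∧ b ∈ S ∧ D a b) v v

/-- A coloring of the vertices of the digraph `D` with `k` colors all of whose color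
classes are acyclic. -/
def IsAcyclicColoring (D : V → V → Prop) {k : ℕ} (c : V → Fin k) : Prop :=
  ∀ i, ¬ HasDicycle D (c ⁻¹' {i})

/-- A complete acyclic coloring of the digraph `D` with exactly `k` colors: every color is
used, every color class is acyclic, and the union of any two distinct color classes
contains a directed cycle. -/
def IsCompleteAcyclicColoring (D : V → V → Prop) {k : ℕ} (c : V → Fin k) : Prop :=
  Surjective c ∧ IsAcyclicColoring D c ∧
    ∀ i j : Fin k, i ≠ j → HasDicycle D (c ⁻¹' {i} ∪ c ⁻¹' {j})

/-- The dichromatic number: the minimum number of colors in an acyclic coloring. -/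
noncomputable def dichromaticNumber (D : V → V → Prop) : ℕ :=
  sInf {k | ∃ c : V → Fin k, IsAcyclicColoring D c}

/-- The adichromatic number: the maximum number of colors in a complete acyclic coloring. -/
noncomputable def adichromaticNumber (D : V → V → Prop) : ℕ :=
  sSup {k | ∃ c : V → Fin k, IsCompleteAcyclicColoring D c}

/-- A coloring of the vertices of the graph `G` all of whose color classes induce forests. -/
def IsArborealColoring (G : SimpleGraph V) {k : ℕ} (c : V → Fin k) : Prop :=
  ∀ i, (G.induce (c ⁻¹' {i})).IsAcyclic

/-- A complete arboreal coloring of `G` with exactly `k` colors: every color is used, every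
color class induces a forest, and the union of any two distinct color classes contains a
cycle. -/
def IsCompleteArborealColoring (G : SimpleGraph V) {k : ℕ} (c : V → Fin k) : Prop :=
  Surjective c ∧ IsArborealColoring G c ∧
    ∀ i j : Fin k, i ≠ j → ¬ (G.induce (c ⁻¹' {i} ∪ c ⁻¹' {j})).IsAcyclic

/-- The vertex arboricity: the minimum number of colors in an arboreal coloring. -/
noncomputable def vertexArboricity (G : SimpleGraph V) : ℕ :=
  sInf {k | ∃ c : V → Fin k, IsArborealColoring G c}

/-- The a-vertex arboricity: the maximum number of colors in a complete arboreal coloring. -/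
noncomputable def avertexArboricity (G : SimpleGraph V) : ℕ :=
  sSup {k | ∃ c : V → Fin k, IsCompleteArborealColoring G c}

/-- The minimum size of a directed feedback vertex set of the digraph `D`. -/
noncomputable def digraphFVSNumber [Fintype V] (D : V → V → Prop) : ℕ :=
  sInf {n | ∃ F : Finset V, F.card = n ∧ ¬ HasDicycle D ((↑F : Set V)ᶜ)}

/-- The minimum size of a feedback vertex set of the graph `G`. -/
noncomputable def graphFVSNumber [Fintype V] (G : SimpleGraph V) : ℕ :=
  sInf {n | ∃ F : Finset V, F.card = n ∧ (G.induce ((↑F : Set V)ᶜ)).IsAcyclic}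

/-- A complete coloring in the sense of the diachromatic number: all classes are acyclic
and for every ordered pair `(i, j)` of distinct colors there is an arc with tail colored
`j` and head colored `i`. -/
def IsCompleteDiColoring (D : V → V → Prop) {k : ℕ} (c : V → Fin k) : Prop :=
  Surjective c ∧ IsAcyclicColoring D c ∧
    ∀ i j : Fin k, i ≠ j → ∃ u v, D u v ∧ c u = j ∧ c v = i

/-- The diachromatic number of the digraph `D`. -/
noncomputable def diachromaticNumber (D : V → V → Prop) : ℕ :=
  sSup {k | ∃ c : V → Fin k, IsCompleteDiColoring D c}

/-- A complete proper coloring of the graph `G`: proper, surjective, and any two distinct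
colors appear together on some edge. -/
def IsCompleteProperColoring (G : SimpleGraph V) {k : ℕ} (c : V → Fin k) : Prop :=
  Surjective c ∧ (∀ u v, G.Adj u v → c u ≠ c v) ∧
    ∀ i j : Fin k, i ≠ j → ∃ u v, G.Adj u v ∧ c u = i ∧ c v = j

/-- The achromatic number: the maximum number of colors in a complete proper coloring. -/
noncomputable def achromaticNumber (G : SimpleGraph V) : ℕ :=
  sSup {k | ∃ c : V → Fin k, IsCompleteProperColoring G c}

/-- The subdigraph of `D` induced by the vertex set `S`. -/
def induceDigraph (D : V → V → Prop) (S : Set V) : S → S → Prop :=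
  fun a b => D a.1 b.1

/-- `D` is an orientation of the simple graph `G`: every arc of `D` is an edge of `G`, and
every edge of `G` is given exactly one of its two possible directions. -/
def IsOrientation (G : SimpleGraph V) (D : V → V → Prop) : Prop :=
  (∀ u v, D u v → G.Adj u v) ∧ ∀ u v, G.Adj u v → Xor' (D u v) (D v u)

end Defs

section FeedbackVertexSet

variable {V : Type*} {G : SimpleGraph V}

/-- `F` is a feedback vertex set of `G`. That `F` meets every cycle is encoded as acyclicity of
the graph induced on the complement of `F`, the form in which `graphFVSNumber` uses the notion. -/
def IsFeedbackVertexSet (G : SimpleGraph V) (F : Set V) : Prop :=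
  (G.induce Fᶜ).IsAcyclic

theorem isFeedbackVertexSet_univ (G : SimpleGraph V) : IsFeedbackVertexSet G Set.univ := by
  rw [IsFeedbackVertexSet, Set.compl_univ]
  exact .of_subsingleton

theorem IsFeedbackVertexSet.inter_nonempty {F S : Set V} (hF : IsFeedbackVertexSet G F)
    (hS : ¬ (G.induce S).IsAcyclic) : (S ∩ F).Nonempty := by
  rw [← Set.not_disjoint_iff_nonempty_inter, ← Set.subset_compl_iff_disjoint_right]
  exact fun hSF => hS (hF.embedding (G.induceHomOfLE hSF))

theorem exists_isFeedbackVertexSet_card_eq_graphFVSNumber [Fintype V] (G : SimpleGraph V) :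
    ∃ F : Finset V, IsFeedbackVertexSet G F ∧ F.card = graphFVSNumber G := by
  have sizes_nonempty : {n | ∃ F : Finset V, F.card = n ∧ IsFeedbackVertexSet G F}.Nonempty :=
    ⟨_, Finset.univ, rfl, Finset.coe_univ (α := V) ▸ isFeedbackVertexSet_univ G⟩
  obtain ⟨F, hcard, hF⟩ := Nat.sInf_mem sizes_nonempty
  exact ⟨F, hF, hcard⟩

end FeedbackVertexSet

section Coloring

variable {V : Type*} {G : SimpleGraph V}

theorem card_le_card_add_one_of_pairwise_exists_mem {ι : Type*} [Fintype ι] {c : V → ι}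
    {F : Finset V} (h : Pairwise fun i j => ∃ v ∈ F, c v = i ∨ c v = j) :
    Fintype.card ι ≤ F.card + 1 := by
  classical
  have card_missed_le_one : (F.image c)ᶜ.card ≤ 1 := by
    refine Finset.card_le_one.2 fun i hi j hj => by_contra fun hij => ?_
    obtain ⟨v, hv, rfl | rfl⟩ := h hij
    · exact Finset.mem_compl.1 hi (Finset.mem_image_of_mem c hv)
    · exact Finset.mem_compl.1 hj (Finset.mem_image_of_mem c hv)
  calc Fintype.card ι = (F.image c).card + (F.image c)ᶜ.card :=
        (Finset.card_add_card_compl _).symm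
    _ ≤ F.card + 1 := Nat.add_le_add Finset.card_image_le card_missed_le_one

theorem IsCompleteArborealColoring.pairwise_exists_mem {k : ℕ} {c : V → Fin k} {F : Set V}
    (hc : IsCompleteArborealColoring G c) (hF : IsFeedbackVertexSet G F) :
    Pairwise fun i j => ∃ v ∈ F, c v = i ∨ c v = j := by
  obtain ⟨-, -, union_not_acyclic⟩ := hc
  intro i j hij
  obtain ⟨v, hv, hvF⟩ := hF.inter_nonempty (union_not_acyclic i j hij)
  exact ⟨v, hvF, hv⟩

theorem IsCompleteArborealColoring.le_card_add_one {k : ℕ} {c : V → Fin k} {F : Finset V}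
    (hc : IsCompleteArborealColoring G c) (hF : IsFeedbackVertexSet G F) :
    k ≤ F.card + 1 := by
  simpa only [Fintype.card_fin] using
    card_le_card_add_one_of_pairwise_exists_mem (hc.pairwise_exists_mem hF)

theorem avertexArboricity_le_fvs_add_one_general {F : Finset V}
    (hF : IsFeedbackVertexSet G F) : avertexArboricity G ≤ F.card + 1 :=
  csSup_le' fun _ ⟨_, hc⟩ => hc.le_card_add_one hF

end Coloring

/-- For every finite simple graph `G`, `ava(G) ≤ τ(G) + 1`. -/
theorem avertexArboricity_le_fvs_add_one {V : Type*} [Fintype V] (G : SimpleGraph V) :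
    avertexArboricity G ≤ graphFVSNumber G + 1 := by
  obtain ⟨F, hF, hcard⟩ := exists_isFeedbackVertexSet_card_eq_graphFVSNumber G
  exact hcard ▸ avertexArboricity_le_fvs_add_one_general hF
end

section
/- Let n ≥ 2 be an integer. If G is a finite simple graph that is the vertex-disjoint union of exactly C(n,2) = n(n−1)/2 cycles (each of length at least 3), then ava(G) = n; and if D is a finite digraph that is the vertex-disjoint union of exactly C(n,2) directed cycles (each of length at least 2), then adi(D) = n. -/
open Function

/-!
In a disjoint union of cycles, a vertex set contains a cycle exactly when it contains one of the
cycles entirely. A complete coloring is therefore one in which no cycle is monochromatic and every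
pair of colors `p ≠ q` has a cycle whose set of colors is exactly `{p, q}`. Distinct pairs need
distinct cycles, so `k` colors need at least `k.choose 2` cycles. Conversely, given at least
`k.choose 2` cycles, assign to every cycle a pair of colors so that each pair occurs, and color
each cycle with exactly the two colors of its pair.
-/

section FiberColoring

variable {V ι κ : Type*} {P : V → ι} {c : V → κ}

/-- A surjective coloring `c` of a set partitioned into the fibers of `P` such that no fiber is
monochromatic and any two distinct colors together cover some fiber. Both complete acyclic and
complete arboreal colorings of a disjoint union of cycles are of this form, with the cycles as
fibers. -/
def IsCompleteFiberColoring (P : V → ι) (c : V → κ) : Prop :=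
  Surjective c ∧ (∀ p, ¬ ∃ i, P ⁻¹' {i} ⊆ c ⁻¹' {p}) ∧
    ∀ p q, p ≠ q → ∃ i, P ⁻¹' {i} ⊆ c ⁻¹' {p} ∪ c ⁻¹' {q}

theorem IsCompleteFiberColoring.exists_image_fiber_eq_pair (hc : IsCompleteFiberColoring P c)
    {p q : κ} (hpq : p ≠ q) : ∃ i, c '' (P ⁻¹' {i}) = {p, q} := by
  obtain ⟨-, not_mono, cover⟩ := hc
  obtain ⟨i, hi⟩ := cover p q hpq
  obtain ⟨v, hv, hvp⟩ := Set.not_subset.1 fun h => not_mono p ⟨i, h⟩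
  obtain ⟨w, hw, hwq⟩ := Set.not_subset.1 fun h => not_mono q ⟨i, h⟩
  have image_subset : c '' (P ⁻¹' {i}) ⊆ {p, q} := Set.image_subset_iff.2 hi
  refine ⟨i, image_subset.antisymm (Set.pair_subset ?_ ?_)⟩
  · exact ⟨w, hw, (hi hw).resolve_right hwq⟩
  · exact ⟨v, hv, (hi hv).resolve_left hvp⟩

theorem IsCompleteFiberColoring.choose_two_le_card [Finite ι] (hc : IsCompleteFiberColoring P c) :
    (Nat.card κ).choose 2 ≤ Nat.card ι := by
  classical
  have exists_fiber (s : Set.powersetCard κ 2) : ∃ i, c '' (P ⁻¹' {i}) = s := by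
    obtain ⟨s, hs⟩ := s
    obtain ⟨p, q, hpq, rfl⟩ := Finset.card_eq_two.1 hs
    simpa [← Set.powersetCard.coe_coe] using hc.exists_image_fiber_eq_pair hpq
  choose fiber image_fiber using exists_fiber
  have fiber_injective : Injective fiber := fun s t hst =>
    SetLike.coe_injective <| by rw [← image_fiber, ← image_fiber, hst]
  simpa only [Set.powersetCard.card] using Nat.card_le_card_of_injective fiber fiber_injective

theorem exists_image_fiber_eq_powersetCard_two (hP : ∀ i, (P ⁻¹' {i}).Nontrivial)
    (f : ι → Set.powersetCard κ 2) : ∃ c : V → κ, ∀ i, c '' (P ⁻¹' {i}) = f i := by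
  classical
  choose p q _ hf using fun i => Finset.card_eq_two.1 (f i).prop
  choose a ha b hb hab using hP
  refine ⟨fun v => if v = a (P v) then p (P v) else q (P v), fun i => ?_⟩
  rw [← Set.powersetCard.coe_coe, hf, Finset.coe_pair]
  refine Set.Subset.antisymm ?_ (Set.pair_subset ⟨a i, ha i, ?_⟩ ⟨b i, hb i, ?_⟩)
  · rintro _ ⟨v, rfl, rfl⟩
    dsimp only
    split_ifs <;> simp
  · simp [show P (a i) = i from ha i]
  · simp [show P (b i) = i from hb i, (hab i).symm]

theorem isCompleteFiberColoring_of_image_fiber_eq [Nontrivial κ] {f : ι → Set.powersetCard κ 2}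
    (hf : Surjective f) (hc : ∀ i, c '' (P ⁻¹' {i}) = f i) : IsCompleteFiberColoring P c := by
  classical
  have exists_fiber {p q : κ} (hpq : p ≠ q) : ∃ i, c '' (P ⁻¹' {i}) = {p, q} := by
    obtain ⟨i, hi⟩ := hf (Set.powersetCard.ofCard (Finset.card_pair hpq))
    exact ⟨i, by rw [hc, hi, ← Set.powersetCard.coe_coe]; exact Finset.coe_pair⟩
  refine ⟨fun p => ?_, ?_, fun p q hpq => ?_⟩
  · obtain ⟨q, hqp⟩ := exists_ne p
    obtain ⟨i, hi⟩ := exists_fiber hqp.symm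
    obtain ⟨v, -, hv⟩ := hi.ge (Set.mem_insert p {q})
    exact ⟨v, hv⟩
  · rintro p ⟨i, hi⟩
    have image_subset : (f i : Set κ) ⊆ {p} := hc i ▸ Set.image_subset_iff.2 hi
    have := Set.ncard_le_ncard image_subset
    simp [Set.powersetCard.ncard_eq] at this
  · obtain ⟨i, hi⟩ := exists_fiber hpq
    exact ⟨i, fun v hv => hi.le (Set.mem_image_of_mem c hv)⟩

theorem exists_isCompleteFiberColoring [Finite ι] [Finite κ] [Nontrivial κ]
    (hP : ∀ i, (P ⁻¹' {i}).Nontrivial) (hcard : (Nat.card κ).choose 2 ≤ Nat.card ι) :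
    ∃ c : V → κ, IsCompleteFiberColoring P c := by
  have : Nonempty (Set.powersetCard κ 2) := by
    rw [← Finite.card_pos_iff, Set.powersetCard.card]
    exact Nat.choose_pos Finite.one_lt_card
  have := Fintype.ofFinite ι
  have := Fintype.ofFinite (Set.powersetCard κ 2)
  rw [← Set.powersetCard.card, Nat.card_eq_fintype_card, Nat.card_eq_fintype_card] at hcard
  obtain ⟨g⟩ := Embedding.nonempty_of_card_le hcard
  obtain ⟨c, hc⟩ := exists_image_fiber_eq_powersetCard_two hP (invFun g)
  exact ⟨c, isCompleteFiberColoring_of_image_fiber_eq (invFun_surjective g.injective) hc⟩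

theorem isGreatest_isCompleteFiberColoring [Finite ι] (hP : ∀ i, (P ⁻¹' {i}).Nontrivial) {n : ℕ}
    (hn : 2 ≤ n) (hle : n.choose 2 ≤ Nat.card ι) (hlt : Nat.card ι < (n + 1).choose 2) :
    IsGreatest {k | ∃ c : V → Fin k, IsCompleteFiberColoring P c} n := by
  have : Nontrivial (Fin n) := Fin.nontrivial_iff_two_le.2 hn
  refine ⟨exists_isCompleteFiberColoring hP (by rwa [Nat.card_fin]), ?_⟩
  rintro k ⟨c, hc⟩
  have hk : k.choose 2 < (n + 1).choose 2 := by
    simpa only [Nat.card_fin] using hc.choose_two_le_card.trans_lt hlt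
  exact Nat.lt_succ_iff.1 ((Nat.choose_mono 2).reflect_lt hk)

end FiberColoring

section Digraph

variable {V ι : Type*} {D : V → V → Prop} {S T : Set V} {P : V → ι}

/-- The digraph `D` is the vertex-disjoint union of directed cycles of length at least `2`, the
fibers of `P` being their vertex sets. A directed cycle is encoded as a loopless strongly connected
digraph all of whose out-degrees are one. -/
structure IsDisjointUnionOfDicycles (D : V → V → Prop) (P : V → ι) : Prop where
  irrefl : ∀ v, ¬ D v v
  fiber_eq_of_arc : ∀ u v, D u v → P u = P v
  existsUnique_arc : ∀ v, ∃! w, D v w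
  reflTransGen_of_fiber_eq : ∀ u v, P u = P v → Relation.ReflTransGen D u v
  surjective : Surjective P

theorem HasDicycle.mono (hST : S ⊆ T) : HasDicycle D S → HasDicycle D T :=
  fun ⟨v, hv⟩ => ⟨v, Relation.TransGen.mono (fun _ _ ⟨ha, hb, hab⟩ => ⟨hST ha, hST hb, hab⟩) _ _ hv⟩

theorem reflTransGen_restrict_of_closed (hS : ∀ a b, D a b → a ∈ S → b ∈ S) {u v : V} (hu : u ∈ S)
    (huv : Relation.ReflTransGen D u v) :
    Relation.ReflTransGen (fun a b => a ∈ S ∧ b ∈ S ∧ D a b) u v := by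
  suffices v ∈ S ∧ Relation.ReflTransGen (fun a b => a ∈ S ∧ b ∈ S ∧ D a b) u v from this.2
  induction huv with
  | refl => exact ⟨hu, .refl⟩
  | tail _ hab ih => exact ⟨hS _ _ hab ih.1, ih.2.tail ⟨ih.1, hS _ _ hab ih.1, hab⟩⟩

theorem mem_of_transGen_self_of_reflTransGen (hD : Relator.RightUnique D) {v w : V}
    (hv : Relation.TransGen (fun a b => a ∈ S ∧ b ∈ S ∧ D a b) v v)
    (hvw : Relation.ReflTransGen D v w) : w ∈ S := by
  -- Following the closed walk from `v`, one can return to `v` from every vertex reached.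
  suffices Relation.TransGen (fun a b => a ∈ S ∧ b ∈ S ∧ D a b) w v by
    obtain ⟨_, ⟨hw, -⟩, -⟩ := Relation.TransGen.head'_iff.1 this
    exact hw
  induction hvw with
  | refl => exact hv
  | tail _ hab ih =>
    obtain ⟨b', ⟨-, -, hab'⟩, hb'v⟩ := Relation.TransGen.head'_iff.1 ih
    obtain rfl := hD hab hab'
    obtain rfl | hbv := Relation.reflTransGen_iff_eq_or_transGen.1 hb'v
    exacts [hv, hbv]

namespace IsDisjointUnionOfDicycles

theorem hasDicycle_fiber (h : IsDisjointUnionOfDicycles D P) (i : ι) :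
    HasDicycle D (P ⁻¹' {i}) := by
  obtain ⟨v, rfl⟩ := h.surjective i
  obtain ⟨w, hvw, -⟩ := h.existsUnique_arc v
  have hw : P w = P v := (h.fiber_eq_of_arc v w hvw).symm
  refine ⟨v, .head' ⟨rfl, hw, hvw⟩ ?_⟩
  exact reflTransGen_restrict_of_closed
    (fun a b hab ha => (h.fiber_eq_of_arc a b hab).symm.trans ha) hw
    (h.reflTransGen_of_fiber_eq w v hw)

theorem hasDicycle_iff (h : IsDisjointUnionOfDicycles D P) :
    HasDicycle D S ↔ ∃ i, P ⁻¹' {i} ⊆ S := by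
  refine ⟨fun ⟨v, hv⟩ => ⟨P v, fun w hw => ?_⟩, fun ⟨i, hi⟩ => (h.hasDicycle_fiber i).mono hi⟩
  exact mem_of_transGen_self_of_reflTransGen (fun a _ _ => (h.existsUnique_arc a).unique) hv
    (h.reflTransGen_of_fiber_eq v w hw.symm)

theorem nontrivial_fiber (h : IsDisjointUnionOfDicycles D P) (i : ι) : (P ⁻¹' {i}).Nontrivial := by
  obtain ⟨v, rfl⟩ := h.surjective i
  obtain ⟨w, hvw, -⟩ := h.existsUnique_arc v
  exact ⟨v, rfl, w, (h.fiber_eq_of_arc v w hvw).symm, fun hne => h.irrefl v (hne ▸ hvw)⟩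

theorem isCompleteAcyclicColoring_iff (h : IsDisjointUnionOfDicycles D P) {k : ℕ} {c : V → Fin k} :
    IsCompleteAcyclicColoring D c ↔ IsCompleteFiberColoring P c := by
  simp only [IsCompleteAcyclicColoring, IsAcyclicColoring, IsCompleteFiberColoring,
    h.hasDicycle_iff]

end IsDisjointUnionOfDicycles

end Digraph

section Graph

variable {V ι : Type*} {G : SimpleGraph V} {S : Set V} {P : V → ι}

/-- The graph `G` is the vertex-disjoint union of cycles, the fibers of `P` being their vertex
sets. A cycle is encoded as a finite connected graph all of whose degrees are two. -/
structure IsDisjointUnionOfCycles (G : SimpleGraph V) (P : V → ι) : Prop where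
  fiber_eq_of_adj : ∀ u v, G.Adj u v → P u = P v
  finite_fiber : ∀ i, (P ⁻¹' {i}).Finite
  connected_fiber : ∀ i, (G.induce (P ⁻¹' {i})).Connected
  ncard_neighborSet : ∀ v, (G.neighborSet v).ncard = 2

theorem ncard_neighborSet_induce {v : S} (hv : G.neighborSet v ⊆ S) :
    ((G.induce S).neighborSet v).ncard = (G.neighborSet v).ncard := by
  have preimage_eq : (G.induce S).neighborSet v = Subtype.val ⁻¹' G.neighborSet v := rfl
  rw [preimage_eq, Set.ncard_preimage_of_injective_subset_range Subtype.val_injective]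
  rwa [Subtype.range_val]

theorem mem_support_of_isCycle_of_reachable [G.LocallyFinite] (hG : G.IsCycles) {v w : V}
    {p : G.Walk v v} (hp : p.IsCycle) (hvw : G.Reachable v w) : w ∈ p.support := by
  obtain ⟨q⟩ := hvw
  by_contra hw
  obtain ⟨d, -, hfst, hsnd⟩ :=
    q.exists_boundary_dart {u | u ∈ p.support} p.start_mem_support hw
  have hadj := (hp.adj_toSubgraph_iff_of_isCycles hG (p.mem_verts_toSubgraph.2 hfst) _).2 d.adj
  exact hsnd (p.mem_verts_toSubgraph.1 hadj.snd_mem)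

namespace IsDisjointUnionOfCycles

theorem nonempty_neighborSet (h : IsDisjointUnionOfCycles G P) (v : V) :
    (G.neighborSet v).Nonempty :=
  Set.nonempty_of_ncard_ne_zero (by simp [h.ncard_neighborSet])

theorem neighborSet_subset_fiber (h : IsDisjointUnionOfCycles G P) {v : V} {i : ι} (hv : P v = i) :
    G.neighborSet v ⊆ P ⁻¹' {i} :=
  fun w hw => (h.fiber_eq_of_adj v w hw).symm.trans hv

theorem reachable_of_fiber_eq (h : IsDisjointUnionOfCycles G P) {v w : V} (hvw : P v = P w) :
    G.Reachable v w :=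
  ((h.connected_fiber (P w)).preconnected ⟨v, hvw⟩ ⟨w, rfl⟩).map
    (SimpleGraph.Embedding.induce _).toHom

theorem not_isAcyclic_induce_fiber (h : IsDisjointUnionOfCycles G P) (i : ι) :
    ¬ (G.induce (P ⁻¹' {i})).IsAcyclic := by
  have := (h.finite_fiber i).to_subtype
  have ncard_eq (v : P ⁻¹' {i}) : ((G.induce (P ⁻¹' {i})).neighborSet v).ncard = 2 := by
    rw [ncard_neighborSet_induce (h.neighborSet_subset_fiber v.2), h.ncard_neighborSet]
  have isCycles : (G.induce (P ⁻¹' {i})).IsCycles := fun v _ => ncard_eq v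
  obtain ⟨v⟩ := (h.connected_fiber i).nonempty
  obtain ⟨p, hp, -⟩ := isCycles.exists_cycle_toSubgraph_verts_eq_connectedComponentSupp
    (c := (G.induce (P ⁻¹' {i})).connectedComponentMk v) rfl
    (Set.nonempty_of_ncard_ne_zero (by simp [ncard_eq]))
  exact fun hacyclic => hacyclic p hp

theorem fiber_subset_of_isCycle (h : IsDisjointUnionOfCycles G P) {v : S}
    {p : (G.induce S).Walk v v} (hp : p.IsCycle) : P ⁻¹' {P v} ⊆ S := by
  intro w hw
  let _ : G.LocallyFinite := fun u =>
    (Set.finite_of_ncard_ne_zero (by simp [h.ncard_neighborSet u])).fintype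
  have hmap := hp.map (f := (SimpleGraph.Embedding.induce S).toHom) Subtype.val_injective
  have hmem := mem_support_of_isCycle_of_reachable (fun u _ => h.ncard_neighborSet u) hmap
    (h.reachable_of_fiber_eq (Eq.symm hw))
  rw [SimpleGraph.Walk.support_map] at hmem
  obtain ⟨u, -, rfl⟩ := List.mem_map.1 hmem
  exact u.2

theorem not_isAcyclic_induce_iff (h : IsDisjointUnionOfCycles G P) :
    ¬ (G.induce S).IsAcyclic ↔ ∃ i, P ⁻¹' {i} ⊆ S := by
  constructor
  · intro hcyclic
    simp only [SimpleGraph.IsAcyclic, not_forall, not_not] at hcyclic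
    obtain ⟨v, p, hp⟩ := hcyclic
    exact ⟨P v, h.fiber_subset_of_isCycle hp⟩
  · rintro ⟨i, hi⟩ hacyclic
    exact h.not_isAcyclic_induce_fiber i (hacyclic.embedding (G.induceHomOfLE hi))

theorem nontrivial_fiber (h : IsDisjointUnionOfCycles G P) (i : ι) : (P ⁻¹' {i}).Nontrivial := by
  obtain ⟨v, hv⟩ := (h.connected_fiber i).nonempty
  obtain ⟨w, hvw⟩ := h.nonempty_neighborSet v
  exact ⟨v, hv, w, h.neighborSet_subset_fiber hv hvw, hvw.ne⟩

theorem isCompleteArborealColoring_iff (h : IsDisjointUnionOfCycles G P) {k : ℕ} {c : V → Fin k} :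
    IsCompleteArborealColoring G c ↔ IsCompleteFiberColoring P c := by
  simp only [IsCompleteArborealColoring, IsArborealColoring, IsCompleteFiberColoring,
    ← h.not_isAcyclic_induce_iff, not_not]

end IsDisjointUnionOfCycles

end Graph

theorem disjoint_union_of_cycles_general {V ι : Type*} [Finite ι] {P : V → ι} {n : ℕ} (hn : 2 ≤ n)
    (hle : n.choose 2 ≤ Nat.card ι) (hlt : Nat.card ι < (n + 1).choose 2) :
    (∀ G : SimpleGraph V, IsDisjointUnionOfCycles G P → avertexArboricity G = n) ∧
      ∀ D : V → V → Prop, IsDisjointUnionOfDicycles D P → adichromaticNumber D = n := by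
  refine ⟨fun G h => ?_, fun D h => ?_⟩
  · simp only [avertexArboricity, h.isCompleteArborealColoring_iff]
    exact (isGreatest_isCompleteFiberColoring h.nontrivial_fiber hn hle hlt).csSup_eq
  · simp only [adichromaticNumber, h.isCompleteAcyclicColoring_iff]
    exact (isGreatest_isCompleteFiberColoring h.nontrivial_fiber hn hle hlt).csSup_eq

/-- if a finite simple graph `G` is the vertex-disjoint union of exactly
`C(n,2)` cycles (each of length at least 3; equivalently, each part of the partition
induces a connected `2`-regular graph and no edges join different parts), then
`ava(G) = n`; and if a finite digraph `D` is the vertex-disjoint union of exactly `C(n,2)`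
directed cycles (each of length at least 2; equivalently, every vertex has a unique
out-neighbor and a unique in-neighbor, all arcs stay within parts, and each of the
`C(n,2)` nonempty parts is strongly connected), then `adi(D) = n`. -/
theorem disjoint_union_of_cycles (n : ℕ) (hn : 2 ≤ n) :
    (∀ (V : Type) [Fintype V] (G : SimpleGraph V) (P : V → Fin (n.choose 2)),
      (∀ u v, G.Adj u v → P u = P v) →
      (∀ i, (G.induce (P ⁻¹' {i})).Connected) →
      (∀ v, (G.neighborSet v).ncard = 2) →
      avertexArboricity G = n) ∧
    (∀ (V : Type) [Fintype V] (D : V → V → Prop), Irreflexive D →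
      ∀ P : V → Fin (n.choose 2),
      (∀ u v, D u v → P u = P v) →
      (∀ v, ∃! w, D v w) →
      (∀ v, ∃! w, D w v) →
      (∀ u v, P u = P v → Relation.ReflTransGen D u v) →
      Function.Surjective P →
      adichromaticNumber D = n) := by
  have hle : n.choose 2 ≤ Nat.card (Fin (n.choose 2)) := (Nat.card_fin _).ge
  have hlt : Nat.card (Fin (n.choose 2)) < (n + 1).choose 2 := by
    rw [Nat.card_fin, Nat.choose_succ_succ' n 1, Nat.choose_one_right]
    exact Nat.lt_add_of_pos_left (by positivity)
  exact ⟨fun V _ G P hadj hconn hdeg => (disjoint_union_of_cycles_general hn hle hlt).1 G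
      ⟨hadj, fun _ => Set.toFinite _, hconn, hdeg⟩,
    fun V _ D hirrefl P harc hout _ hreach hsurj =>
      (disjoint_union_of_cycles_general hn hle hlt).2 D ⟨hirrefl, harc, hout, hreach, hsurj⟩⟩
end
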